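/- Let $f: \mathbb{R}^N \to \mathbb{R}$ be partially separable of degree $\omega$ with convex summands, block-Lipschitz gradients with constants $L_1,\dots,L_n$, and let $\hat{Z}$ be a $(C,\tau)$-distributed sampling over a balanced partition into parts of size $s$. Let $\xi = \max\{|P^{(c)} \cap J| : c \in [C], J \in \mathcal{J}\}$. Then for all $x, h \in \mathbb{R}^N$: $\mathbb{E}[f(x + h_{[\hat{Z}]})] \leq f(x) + \frac{C\tau}{n}\left(\langle\nabla f(x), h\rangle + \frac{\beta}{2}\|h\|_w^2\right)$ with $\beta = 1 + \frac{(\xi-1)(\tau-1)}{\max\{1, s-1\}} + (C-1)\frac{\xi\tau}{s}$ and $w_i = L_i$. -/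

import Mathlib

/-!
Enlarge each `J` to a set `K` meeting every part in exactly `ξ` blocks. By convexity of `f_J`, the
increment of `f_J` along the sampled blocks of `K` is at most the average of its increments along
the single blocks `i ∈ K ∩ Ẑ`, each stretched by `|K ∩ Ẑ|`. Permutations of the blocks that permute
the parts preserve the sampling and act transitively on the pairs `(i, K)`, so the contribution of
block `i` is the same as if `i ∈ Ẑ` and `|K ∩ Ẑ|` were replaced by `i₀ ∈ Ẑ` and `|K₀ ∩ Ẑ|` for one
reference pair `i₀ ∈ K₀`. With all the stretches equal, the bounds for the `f_J` add up to one for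
`f`, to which the block descent inequality applies. It is linear in the stretch, and `β` is the
conditional expectation of `|K₀ ∩ Ẑ|` given `i₀ ∈ Ẑ`.
-/

section Balanced

open Finset

theorem exists_perm_comp_eq_of_card_fiber_eq {α γ : Type*} [Fintype α] [DecidableEq γ]
    {f g : α → γ} (h : ∀ c, #{i | f i = c} = #{i | g i = c}) :
    ∃ σ : Equiv.Perm α, ∀ i, g (σ i) = f i := by
  have hequiv : ∀ c, Nonempty ({i // f i = c} ≃ {i // g i = c}) := fun c =>
    Fintype.card_eq.1 (by simpa only [Fintype.card_subtype] using h c)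
  exact ⟨Equiv.ofFiberEquiv fun c => (hequiv c).some, Equiv.ofFiberEquiv_map _⟩

theorem card_mul_sum_card_inter_of_swap_invariant {α : Type*} [DecidableEq α]
    {𝒰 : Finset (Finset α)} {A B : Finset α}
    (h𝒰 : ∀ j ∈ B, ∀ j' ∈ B, ∀ U ∈ 𝒰, U.map (Equiv.swap j j').toEmbedding ∈ 𝒰) (hAB : A ⊆ B) :
    #B * ∑ U ∈ 𝒰, #(A ∩ U) = #A * ∑ U ∈ 𝒰, #(B ∩ U) := by
  rcases A.eq_empty_or_nonempty with rfl | ⟨a, ha⟩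
  · simp
  have hle : ∀ j ∈ B, ∀ j' ∈ B, #{U ∈ 𝒰 | j ∈ U} ≤ #{U ∈ 𝒰 | j' ∈ U} := fun j hj j' hj' =>
    card_le_card_of_injOn (fun U => U.map (Equiv.swap j j').toEmbedding)
      (fun U hU => by simp_all) (map_injective _).injOn
  have heq : ∀ j ∈ B, #{U ∈ 𝒰 | j ∈ U} = #{U ∈ 𝒰 | a ∈ U} := fun j hj =>
    (hle j hj a (hAB ha)).antisymm (hle a (hAB ha) j hj)
  rw [sum_card_inter fun j hj => heq j (hAB hj), sum_card_inter heq]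
  ring

variable {ι κ : Type*} [DecidableEq κ] {p : ι → κ} {m s τ ξ : ℕ}

/-- With `p : ι → κ` encoding a partition of `ι` into the parts `{i | p i = c}`, the set `A` is
`m`-balanced if it has exactly `m` elements in each part. -/
def IsBalanced (p : ι → κ) (m : ℕ) (A : Finset ι) : Prop :=
  ∀ c, #{i ∈ A | p i = c} = m

instance [Fintype κ] : DecidablePred (IsBalanced p m) :=
  fun A => inferInstanceAs (Decidable (∀ c, #{i ∈ A | p i = c} = m))

theorem IsBalanced.card_eq [Fintype κ] {A : Finset ι} (hA : IsBalanced p m A) :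
    #A = Fintype.card κ * m := by
  rw [card_eq_sum_card_fiberwise (f := p) (t := univ) fun _ _ => mem_coe.2 (mem_univ _),
    sum_congr rfl fun c _ => hA c, sum_const, card_univ, smul_eq_mul]

theorem isBalanced_map_perm {σ : Equiv.Perm ι} {π : Equiv.Perm κ} (hσ : ∀ i, p (σ i) = π (p i))
    {A : Finset ι} : IsBalanced p m (A.map σ.toEmbedding) ↔ IsBalanced p m A := by
  simp only [IsBalanced, filter_map, card_map]
  refine (π.forall_congr fun c => ?_).symm
  simp [hσ]

variable [Fintype ι]

/-- The `(C, τ)`-distributed sampling as the family of its equally likely outcomes. -/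
def distributedSampling [Fintype κ] (p : ι → κ) (τ : ℕ) : Finset (Finset ι) :=
  {U | IsBalanced p τ U}

theorem mem_distributedSampling [Fintype κ] {U : Finset ι} :
    U ∈ distributedSampling p τ ↔ IsBalanced p τ U :=
  mem_filter_univ U

theorem exists_isBalanced_superset (hp : IsBalanced p s univ) {J : Finset ι}
    (hJ : ∀ c, #{i ∈ J | p i = c} ≤ ξ) (hξ : ξ ≤ s) : ∃ K, J ⊆ K ∧ IsBalanced p ξ K := by
  classical
  have hexists : ∀ c, ∃ K : Finset ι, {i ∈ J | p i = c} ⊆ K ∧ K ⊆ ({i | p i = c} : Finset ι) ∧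
      #K = ξ := fun c =>
    exists_subsuperset_card_eq (filter_subset_filter _ (subset_univ J)) (hJ c) ((hp c).symm ▸ hξ)
  choose K hJK hKp hK using hexists
  refine ⟨({i | i ∈ K (p i)} : Finset ι), fun i hi => ?_, fun c => ?_⟩
  · simpa using hJK (p i) (by simpa using hi)
  · rw [← hK c]
    congr 1
    ext i
    have : i ∈ K c → p i = c := fun hi => by simpa using hKp c hi
    grind

theorem IsBalanced.compl [DecidableEq ι] (hp : IsBalanced p s univ) {K : Finset ι}
    (hK : IsBalanced p ξ K) :
    IsBalanced p (s - ξ) Kᶜ := fun c => by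
  rw [← hp c, ← hK c, ← card_sdiff_of_subset (filter_subset_filter _ (subset_univ K))]
  congr 1
  grind [mem_compl]

theorem exists_perm_map_eq_of_isBalanced (hp : IsBalanced p s univ) {K K' : Finset ι}
    (hK : IsBalanced p ξ K) (hK' : IsBalanced p ξ K') {i i' : ι} (hi : i ∈ K) (hi' : i' ∈ K') :
    ∃ (σ : Equiv.Perm ι) (π : Equiv.Perm κ),
      (∀ j, p (σ j) = π (p j)) ∧ K.map σ.toEmbedding = K' ∧ σ i = i' := by
  classical
  let π := Equiv.swap (p i) (p i')
  obtain ⟨σ, hσ⟩ := exists_perm_comp_eq_of_card_fiber_eq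
      (f := fun j => (decide (j ∈ K), π (p j))) (g := fun j => (decide (j ∈ K'), p j)) <| by
    rintro ⟨_ | _, c⟩
    · simpa [← filter_filter, filter_not, ← compl_eq_univ_sdiff, ← Equiv.eq_symm_apply] using
        (hp.compl hK (π.symm c)).trans (hp.compl hK' c).symm
    · simpa [← filter_filter, ← Equiv.eq_symm_apply] using (hK (π.symm c)).trans (hK' c).symm
  simp only [Prod.mk.injEq, decide_eq_decide] at hσ
  have hpσ : p (σ i) = p i' := by rw [(hσ i).2, Equiv.swap_apply_left]
  have hσi : σ i ∈ K' := (hσ i).1.2 hi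
  -- `σ i` and `i'` lie in the same part of `K'`, so swapping them preserves `K'` and the parts.
  refine ⟨σ.trans (Equiv.swap (σ i) i'), π, fun j => ?_, ?_, by simp⟩
  · rw [← (hσ j).2, Equiv.trans_apply]
    grind
  · ext j
    rw [mem_map_equiv, ← (hσ _).1, Equiv.symm_trans_apply, Equiv.apply_symm_apply, Equiv.symm_swap]
    clear hσ
    grind

theorem distributedSampling_nonempty [Fintype κ] (hp : IsBalanced p s univ) (hτ : τ ≤ s) :
    (distributedSampling p τ).Nonempty := by
  obtain ⟨U, -, hU⟩ := exists_isBalanced_superset hp (J := ∅) (ξ := τ) (by simp) hτ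
  exact ⟨U, mem_distributedSampling.2 hU⟩

variable [DecidableEq ι] [Fintype κ]

theorem exists_eq_filter_of_biUnion_eq_univ {P : κ → Finset ι} (hpart : univ = univ.biUnion P)
    (hdisj : ∀ c c', c ≠ c' → Disjoint (P c) (P c')) :
    ∃ p : ι → κ, P = fun c => ({i | p i = c} : Finset ι) := by
  have hcover : ∀ i, ∃ c, i ∈ P c := fun i => by simpa [hpart] using mem_univ i
  choose p hp using hcover
  refine ⟨p, funext fun c => ext fun i => ?_⟩
  rw [mem_filter_univ]
  refine ⟨fun hi => by_contra fun hc => ?_, fun hi => hi ▸ hp i⟩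
  exact disjoint_left.1 (hdisj _ _ (Ne.symm hc)) hi (hp i)

theorem sum_piFinset_powersetCard_biUnion {M : Type*} [AddCommMonoid M] (F : Finset ι → M) :
    ∑ Z ∈ Fintype.piFinset fun c => powersetCard τ {i | p i = c}, F (univ.biUnion Z) =
      ∑ U ∈ distributedSampling p τ, F U := by
  have hfilter : ∀ Z ∈ Fintype.piFinset fun c => powersetCard τ ({i | p i = c} : Finset ι),
      ∀ c, {i ∈ univ.biUnion Z | p i = c} = Z c := fun Z hZ c => by
    have hp : ∀ c, ∀ i ∈ Z c, p i = c := fun c i hi => by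
      simpa using (mem_powersetCard.1 (Fintype.mem_piFinset.1 hZ c)).1 hi
    ext i
    grind
  refine sum_nbij' (fun Z => univ.biUnion Z) (fun U c => {i ∈ U | p i = c}) ?_ ?_ ?_ ?_ ?_
  · intro Z hZ
    refine mem_distributedSampling.2 fun c => ?_
    rw [hfilter Z hZ]
    exact (mem_powersetCard.1 (Fintype.mem_piFinset.1 hZ c)).2
  · intro U hU
    exact Fintype.mem_piFinset.2 fun c => mem_powersetCard.2
      ⟨filter_subset_filter _ (subset_univ U), mem_distributedSampling.1 hU c⟩
  · exact fun Z hZ => funext (hfilter Z hZ)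
  · intro U _
    ext i
    simp
  · exact fun _ _ => rfl

theorem sum_distributedSampling_mem_card_inter_eq {M : Type*} [AddCommMonoid M] (ψ : ℕ → M)
    (hp : IsBalanced p s univ) {K K' : Finset ι} (hK : IsBalanced p ξ K)
    (hK' : IsBalanced p ξ K') {i i' : ι} (hi : i ∈ K) (hi' : i' ∈ K') :
    ∑ U ∈ distributedSampling p τ with i ∈ U, ψ #(K ∩ U) =
      ∑ U ∈ distributedSampling p τ with i' ∈ U, ψ #(K' ∩ U) := by
  obtain ⟨σ, π, hσ, rfl, rfl⟩ := exists_perm_map_eq_of_isBalanced hp hK hK' hi hi'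
  refine sum_equiv σ.finsetCongr (fun U => ?_) fun U _ => ?_
  · simp [mem_distributedSampling, isBalanced_map_perm hσ]
  · rw [Equiv.finsetCongr_apply, ← map_inter, card_map]

theorem map_swap_mem_distributedSampling {U : Finset ι} (hU : U ∈ distributedSampling p τ)
    {j j' : ι} (h : p j = p j') :
    U.map (Equiv.swap j j').toEmbedding ∈ distributedSampling p τ := by
  rw [mem_distributedSampling, isBalanced_map_perm (π := 1) fun i => ?_]
  · exact mem_distributedSampling.1 hU
  · rw [Equiv.Perm.one_apply]
    grind

theorem card_fiber_inter_of_mem_distributedSampling {U : Finset ι}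
    (hU : U ∈ distributedSampling p τ) (c : κ) :
    #(({i | p i = c} : Finset ι) ∩ U) = τ := by
  rw [filter_inter, univ_inter, mem_distributedSampling.1 hU c]

theorem card_distributedSampling_mem (hp : IsBalanced p s univ) (i : ι) :
    s * #{U ∈ distributedSampling p τ | i ∈ U} = τ * #(distributedSampling p τ) := by
  have h := card_mul_sum_card_inter_of_swap_invariant (𝒰 := distributedSampling p τ) (A := {i})
    (B := {j | p j = p i})
    (fun j hj j' hj' U hU => map_swap_mem_distributedSampling hU (by simp_all)) (by simp)
  rw [hp, sum_congr rfl fun U hU => card_fiber_inter_of_mem_distributedSampling hU (p i),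
    sum_const, card_singleton, one_mul, smul_eq_mul, mul_comm _ τ] at h
  rw [← h, card_filter]
  congr! with U
  split_ifs with hi <;> simp [hi]

theorem map_swap_mem_filter_mem_distributedSampling {i j j' : ι} (hj : j ≠ i) (hj' : j' ≠ i)
    (h : p j = p j') {U : Finset ι} (hU : U ∈ {U ∈ distributedSampling p τ | i ∈ U}) :
    U.map (Equiv.swap j j').toEmbedding ∈ {U ∈ distributedSampling p τ | i ∈ U} := by
  rw [mem_filter] at hU ⊢
  refine ⟨map_swap_mem_distributedSampling hU.1 h, ?_⟩
  rw [mem_map_equiv, Equiv.symm_swap, Equiv.swap_apply_of_ne_of_ne hj.symm hj'.symm]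
  exact hU.2

theorem sum_distributedSampling_mem_card_fiber_inter_of_ne (hp : IsBalanced p s univ)
    {K : Finset ι} (hK : IsBalanced p ξ K) {i : ι} {c : κ} (hc : c ≠ p i) :
    s * ∑ U ∈ distributedSampling p τ with i ∈ U, #({j ∈ K | p j = c} ∩ U) =
      ξ * τ * #{U ∈ distributedSampling p τ | i ∈ U} := by
  have h := card_mul_sum_card_inter_of_swap_invariant (A := {j ∈ K | p j = c})
    (B := {j | p j = c}) (𝒰 := {U ∈ distributedSampling p τ | i ∈ U})
    (fun j hj j' hj' U => map_swap_mem_filter_mem_distributedSampling (by grind) (by grind)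
      (by grind)) (filter_subset_filter _ (subset_univ K))
  have hcard : ∀ U ∈ ({U ∈ distributedSampling p τ | i ∈ U} : Finset (Finset ι)),
      #(({j | p j = c} : Finset ι) ∩ U) = τ := fun U hU =>
    card_fiber_inter_of_mem_distributedSampling (mem_of_mem_filter U hU) c
  rw [hp, hK, sum_congr rfl hcard, sum_const, smul_eq_mul] at h
  rw [h]
  ring

theorem sum_distributedSampling_mem_card_fiber_erase_inter (hp : IsBalanced p s univ)
    {K : Finset ι} (hK : IsBalanced p ξ K) {i : ι} (hi : i ∈ K) :
    (s - 1) * ∑ U ∈ distributedSampling p τ with i ∈ U, #({j ∈ K | p j = p i}.erase i ∩ U) =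
      (ξ - 1) * (τ - 1) * #{U ∈ distributedSampling p τ | i ∈ U} := by
  have h := card_mul_sum_card_inter_of_swap_invariant (A := {j ∈ K | p j = p i}.erase i)
    (B := ({j | p j = p i} : Finset ι).erase i) (𝒰 := {U ∈ distributedSampling p τ | i ∈ U})
    (fun j hj j' hj' U => map_swap_mem_filter_mem_distributedSampling (by grind) (by grind)
      (by grind)) (erase_subset_erase _ (filter_subset_filter _ (subset_univ K)))
  have hcard : ∀ U ∈ ({U ∈ distributedSampling p τ | i ∈ U} : Finset (Finset ι)),
      #(({j | p j = p i} : Finset ι).erase i ∩ U) = τ - 1 := fun U hU => by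
    rw [mem_filter] at hU
    rw [erase_inter, card_erase_of_mem (by simp [hU.2]),
      card_fiber_inter_of_mem_distributedSampling hU.1]
  rw [card_erase_of_mem (by simp), card_erase_of_mem (by simp [hi]), hp, hK, sum_congr rfl hcard,
    sum_const, smul_eq_mul] at h
  rw [h]
  ring

theorem sum_distributedSampling_mem_cast_card_fiber_erase_inter (hp : IsBalanced p s univ)
    {K : Finset ι} (hK : IsBalanced p ξ K) {i : ι} (hi : i ∈ K) :
    ∑ U ∈ distributedSampling p τ with i ∈ U, (#({j ∈ K | p j = p i}.erase i ∩ U) : ℝ) =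
      ((ξ : ℝ) - 1) * ((τ : ℝ) - 1) / max 1 ((s : ℝ) - 1) *
        #{U ∈ distributedSampling p τ | i ∈ U} := by
  rcases ({U ∈ distributedSampling p τ | i ∈ U} : Finset (Finset ι)).eq_empty_or_nonempty with
    h𝒰 | ⟨U, hU⟩
  · simp [h𝒰]
  have hξ : 1 ≤ ξ := hK (p i) ▸ card_pos.2 ⟨i, by simp [hi]⟩
  have hτ : 1 ≤ τ := by
    rw [mem_filter] at hU
    exact mem_distributedSampling.1 hU.1 (p i) ▸ card_pos.2 ⟨i, by simp [hU.2]⟩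
  have hξs : ξ ≤ s := by
    rw [← hK (p i), ← hp (p i)]
    exact card_le_card (filter_subset_filter _ (subset_univ K))
  rcases (hξ.trans hξs).eq_or_lt with rfl | hs
  · obtain rfl : ξ = 1 := hξs.antisymm hξ
    have hempty : {j ∈ K | p j = p i}.erase i = ∅ :=
      card_eq_zero.1 (by rw [card_erase_of_mem (by simp [hi]), hK])
    simp [hempty]
  · have h := sum_distributedSampling_mem_card_fiber_erase_inter (τ := τ) hp hK hi
    have hs' : (2 : ℝ) ≤ s := mod_cast hs
    rify [hξ, hτ, hs.le] at h
    rw [max_eq_right (by linarith), div_mul_eq_mul_div, eq_div_iff (by linarith), ← h, mul_comm]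

/-- The factor `β` of the expected separable overapproximation for `C` parts of size `s`, samples
of `τ` elements from each part, and summands meeting each part in at most `ξ` elements. -/
noncomputable def esoFactor (C s τ ξ : ℕ) : ℝ :=
  1 + ((ξ : ℝ) - 1) * ((τ : ℝ) - 1) / max 1 ((s : ℝ) - 1) + ((C : ℝ) - 1) * ((ξ : ℝ) * τ / s)

theorem esoFactor_zero_nonneg (C : ℕ) (hτ : τ ≤ s) : 0 ≤ esoFactor C s τ 0 := by
  have hτ' : (τ : ℝ) ≤ s := mod_cast hτ
  have hle : ((τ : ℝ) - 1) / max 1 ((s : ℝ) - 1) ≤ 1 :=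
    div_le_one_of_le₀ (le_max_of_le_right (by linarith)) (by positivity)
  simp only [esoFactor, Nat.cast_zero, zero_sub, neg_mul, one_mul, neg_div, zero_mul, zero_div,
    mul_zero, add_zero]
  linarith

theorem sum_distributedSampling_mem_card_inter_eq_esoFactor_mul (hp : IsBalanced p s univ)
    {K : Finset ι} (hK : IsBalanced p ξ K) {i : ι} (hi : i ∈ K) :
    ∑ U ∈ distributedSampling p τ with i ∈ U, (#(K ∩ U) : ℝ) =
      esoFactor (Fintype.card κ) s τ ξ * #{U ∈ distributedSampling p τ | i ∈ U} := by
  set 𝒰 : Finset (Finset ι) := {U ∈ distributedSampling p τ | i ∈ U} with h𝒰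
  have hs : (s : ℝ) ≠ 0 := by
    rw [← hp (p i), Nat.cast_ne_zero, card_ne_zero]
    exact ⟨i, by simp⟩
  have hsplit : ∀ U ∈ 𝒰, #(K ∩ U) = 1 + #({j ∈ K | p j = p i}.erase i ∩ U) +
      ∑ c ∈ univ.erase (p i), #({j ∈ K | p j = c} ∩ U) := fun U hU => by
    have hiU : i ∈ {j ∈ K | p j = p i} ∩ U := by simp_all
    rw [card_eq_sum_card_fiberwise (f := p) (t := univ) fun _ _ => mem_coe.2 (mem_univ _),
      ← add_sum_erase _ _ (mem_univ (p i)), erase_inter, add_comm 1, card_erase_add_one hiU]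
    simp only [filter_inter]
  have hother : ∀ c ∈ univ.erase (p i), ∑ U ∈ 𝒰, (#({j ∈ K | p j = c} ∩ U) : ℝ) =
      (ξ : ℝ) * τ / s * #𝒰 := fun c hc => by
    have h := sum_distributedSampling_mem_card_fiber_inter_of_ne (τ := τ) hp hK (ne_of_mem_erase hc)
    rw [div_mul_eq_mul_div, eq_div_iff hs, mul_comm]
    exact_mod_cast h
  rw [sum_congr rfl fun U hU => congrArg Nat.cast (hsplit U hU)]
  push_cast
  rw [sum_add_distrib, sum_add_distrib, sum_comm,
    sum_distributedSampling_mem_cast_card_fiber_erase_inter hp hK hi, sum_congr rfl hother,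
    sum_const, sum_const, card_erase_of_mem (mem_univ _), card_univ, esoFactor, nsmul_eq_mul,
    nsmul_eq_mul, Nat.cast_pred (Fintype.card_pos_iff.2 ⟨p i⟩)]
  ring

end Balanced

section BlockCoordinates

open Finset

theorem apply_add_le_of_fderiv_line_sub_le {V : Type*} [NormedAddCommGroup V] [NormedSpace ℝ V]
    {f : V → ℝ} (hf : Differentiable ℝ f) {x u : V} {M : ℝ}
    (h : ∀ t ∈ Set.Ico (0 : ℝ) 1, fderiv ℝ f (x + t • u) u - fderiv ℝ f x u ≤ M * t) :
    f (x + u) ≤ f x + fderiv ℝ f x u + M / 2 := by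
  have hline : ∀ t : ℝ, HasDerivAt (fun t : ℝ => f (x + t • u)) (fderiv ℝ f (x + t • u) u) t :=
    fun t => (hf _).hasFDerivAt.comp_hasDerivAt t
      (by simpa using ((hasDerivAt_id t).smul_const u).const_add x)
  have hquad : ∀ t : ℝ, HasDerivAt (fun t : ℝ => f x + t * fderiv ℝ f x u + M / 2 * t ^ 2)
      (fderiv ℝ f x u + M * t) t := fun t => by
    refine HasDerivAt.congr_deriv ((((hasDerivAt_id t).mul_const _).const_add _).add
      (((hasDerivAt_id t).pow 2).const_mul _)) ?_
    simp only [id, Nat.cast_ofNat, Nat.add_one_sub_one, pow_one, mul_one, one_mul]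
    ring
  have hle := image_le_of_deriv_right_le_deriv_boundary (a := 0) (b := 1)
    (fun t _ => (hline t).continuousAt.continuousWithinAt)
    (fun t _ => (hline t).hasDerivWithinAt) (by simp)
    (fun t _ => (hquad t).continuousAt.continuousWithinAt)
    (fun t _ => (hquad t).hasDerivWithinAt)
    (fun t ht => by linarith [h t ht]) (Set.right_mem_Icc.2 zero_le_one)
  simpa using hle

theorem sub_le_sum_inv_card_mul_of_convexOn {V ι : Type*} [AddCommGroup V] [Module ℝ V] {g : V → ℝ}
    (hg : ConvexOn ℝ Set.univ g) (x : V) (T : Finset ι) (v : ι → V) :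
    g (x + ∑ i ∈ T, v i) - g x ≤
      ∑ i ∈ T, (#T : ℝ)⁻¹ * (g (x + (#T : ℝ) • v i) - g x) := by
  rcases T.eq_empty_or_nonempty with rfl | hT
  · simp
  have hcard : (#T : ℝ) ≠ 0 := by simpa using hT.ne_empty
  have hw : ∑ _i ∈ T, (#T : ℝ)⁻¹ = 1 := by simp [hcard]
  have h := hg.map_sum_le (t := T) (w := fun _ => (#T : ℝ)⁻¹) (p := fun i => x + (#T : ℝ) • v i)
    (fun _ _ => by positivity) hw (fun _ _ => Set.mem_univ _)
  simp only [smul_add, sum_add_distrib, ← sum_smul, hw, inv_smul_smul₀ hcard, smul_eq_mul,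
    one_smul] at h
  simp only [mul_sub, sum_sub_distrib, ← sum_mul, hw, one_mul]
  linarith

variable {ι : Type*} [DecidableEq ι] {E : ι → Type*}

theorem sum_single_eq_piecewise [∀ i, AddCommMonoid (E i)] (T : Finset ι) (h : ∀ i, E i) :
    ∑ i ∈ T, Pi.single i (h i) = T.piecewise h 0 := by
  ext j
  rw [Finset.sum_apply, sum_pi_single]
  rfl

variable [∀ i, NormedAddCommGroup (E i)] [∀ i, NormedSpace ℝ (E i)]
  {f : (∀ i, E i) → ℝ} {L : ι → ℝ}

/-- The partial gradient of `f` in each block `i` is `L i`-Lipschitz along that block. The dual norm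
is expressed through the pairing with block vectors `u`. -/
def BlockLipschitz (f : (∀ i, E i) → ℝ) (L : ι → ℝ) : Prop :=
  ∀ (x : ∀ i, E i) (i : ι) (t u : E i),
    |fderiv ℝ f (x + Pi.single i t) (Pi.single i u) - fderiv ℝ f x (Pi.single i u)| ≤
      L i * ‖t‖ * ‖u‖

theorem BlockLipschitz.mul_sq_nonneg (hL : BlockLipschitz f L) (i : ι) (t : E i) :
    0 ≤ L i * ‖t‖ ^ 2 := by
  simpa only [mul_assoc, ← sq] using (abs_nonneg _).trans (hL 0 i t t)

theorem BlockLipschitz.apply_add_smul_single_le [Finite ι] (hL : BlockLipschitz f L)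
    (hf : Differentiable ℝ f) (x : ∀ i, E i) (i : ι) (u : E i) {k : ℝ} (hk : 0 ≤ k) :
    f (x + k • Pi.single i u) ≤
      f x + k * fderiv ℝ f x (Pi.single i u) + k ^ 2 / 2 * (L i * ‖u‖ ^ 2) := by
  have := Fintype.ofFinite ι
  have hdescent := apply_add_le_of_fderiv_line_sub_le hf (x := x) (u := k • Pi.single i u)
    (M := k ^ 2 * (L i * ‖u‖ ^ 2)) fun t ht => by
      have hLip := (le_abs_self _).trans (hL x i (t • k • u) (k • u))
      simp only [norm_smul, Real.norm_of_nonneg ht.1, Real.norm_of_nonneg hk,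
        Pi.single_smul] at hLip
      linarith
  rwa [map_smul, smul_eq_mul, mul_div_right_comm] at hdescent

theorem BlockLipschitz.sum_inv_mul_sub_le [Fintype ι] (hL : BlockLipschitz f L)
    (hf : Differentiable ℝ f) (x h : ∀ i, E i) {k : ℝ} (hk : 0 < k) :
    ∑ i, k⁻¹ * (f (x + k • Pi.single i (h i)) - f x) ≤
      fderiv ℝ f x h + k / 2 * ∑ i, L i * ‖h i‖ ^ 2 :=
  calc ∑ i, k⁻¹ * (f (x + k • Pi.single i (h i)) - f x)
      ≤ ∑ i, (fderiv ℝ f x (Pi.single i (h i)) + k / 2 * (L i * ‖h i‖ ^ 2)) :=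
        sum_le_sum fun i _ => by
          rw [inv_mul_le_iff₀ hk]
          linarith [hL.apply_add_smul_single_le hf x i (h i) hk.le]
    _ = fderiv ℝ f x h + k / 2 * ∑ i, L i * ‖h i‖ ^ 2 := by
        rw [sum_add_distrib, ← map_sum, univ_sum_single, mul_sum]

end BlockCoordinates

section Overapproximation

open Finset

variable {ι κ : Type*} [Fintype ι] [DecidableEq ι] [Fintype κ] [DecidableEq κ] {p : ι → κ}
  {s τ ξ : ℕ} {E : ι → Type*}

theorem sum_distributedSampling_sub_le_of_dependsOn [∀ i, AddCommGroup (E i)] [∀ i, Module ℝ (E i)]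
    (hp : IsBalanced p s univ) {K K₀ : Finset ι} (hK : IsBalanced p ξ K) (hK₀ : IsBalanced p ξ K₀)
    {i₀ : ι} (hi₀ : i₀ ∈ K₀) {g : (∀ i, E i) → ℝ} (hg : ConvexOn ℝ Set.univ g)
    (hgK : DependsOn g (K : Set ι)) (x h : ∀ i, E i) :
    ∑ U ∈ distributedSampling p τ, (g (x + U.piecewise h 0) - g x) ≤
      ∑ U ∈ distributedSampling p τ with i₀ ∈ U, ∑ i,
        (#(K₀ ∩ U) : ℝ)⁻¹ * (g (x + (#(K₀ ∩ U) : ℝ) • Pi.single i (h i)) - g x) := by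
  let φ (i : ι) (k : ℕ) : ℝ := (k : ℝ)⁻¹ * (g (x + (k : ℝ) • Pi.single i (h i)) - g x)
  have hφ : ∀ i ∉ K, ∀ k, φ i k = 0 := fun i hi k => by
    have : g (x + (k : ℝ) • Pi.single i (h i)) = g x := hgK fun j hj => by
      have hji : j ≠ i := fun h => hi (h ▸ hj)
      simp [hji]
    simp [φ, this]
  have hconvex : ∀ U, g (x + U.piecewise h 0) - g x ≤ ∑ i ∈ K ∩ U, φ i #(K ∩ U) := fun U => by
    have hrestrict : g (x + U.piecewise h 0) = g (x + (K ∩ U).piecewise h 0) := hgK fun j hj => by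
      have hj : j ∈ K := hj
      simp [Finset.piecewise, hj]
    rw [hrestrict, ← sum_single_eq_piecewise]
    exact sub_le_sum_inv_card_mul_of_convexOn hg x (K ∩ U) fun i => Pi.single i (h i)
  calc ∑ U ∈ distributedSampling p τ, (g (x + U.piecewise h 0) - g x)
      ≤ ∑ U ∈ distributedSampling p τ, ∑ i ∈ K ∩ U, φ i #(K ∩ U) :=
        sum_le_sum fun U _ => hconvex U
    _ = ∑ i ∈ K, ∑ U ∈ distributedSampling p τ with i ∈ U, φ i #(K ∩ U) :=
        sum_comm' fun U i => by grind
    _ = ∑ i ∈ K, ∑ U ∈ distributedSampling p τ with i₀ ∈ U, φ i #(K₀ ∩ U) :=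
        sum_congr rfl fun i hi => sum_distributedSampling_mem_card_inter_eq (φ i) hp hK hK₀ hi hi₀
    _ = ∑ U ∈ distributedSampling p τ with i₀ ∈ U, ∑ i, φ i #(K₀ ∩ U) := by
        rw [sum_comm]
        exact sum_congr rfl fun U _ => sum_subset (subset_univ K) fun i _ hi => hφ i hi _

variable [∀ i, NormedAddCommGroup (E i)] [∀ i, NormedSpace ℝ (E i)] {f : (∀ i, E i) → ℝ}
  {L : ι → ℝ} {𝒥 : Finset (Finset ι)} {fJ : Finset ι → (∀ i, E i) → ℝ}

theorem sum_distributedSampling_sub_le_esoFactor (hp : IsBalanced p s univ) {K₀ : Finset ι}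
    (hK₀ : IsBalanced p ξ K₀) {i₀ : ι} (hi₀ : i₀ ∈ K₀) (hξs : ξ ≤ s)
    (hfJ : ∀ x, f x = ∑ J ∈ 𝒥, fJ J x) (hconv : ∀ J ∈ 𝒥, ConvexOn ℝ Set.univ (fJ J))
    (hdep : ∀ J ∈ 𝒥, DependsOn (fJ J) (J : Set ι)) (h𝒥 : ∀ J ∈ 𝒥, ∀ c, #{i ∈ J | p i = c} ≤ ξ)
    (hf : Differentiable ℝ f) (hL : BlockLipschitz f L) (x h : ∀ i, E i) :
    ∑ U ∈ distributedSampling p τ, (f (x + U.piecewise h 0) - f x) ≤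
      #{U ∈ distributedSampling p τ | i₀ ∈ U} *
        (fderiv ℝ f x h + esoFactor (Fintype.card κ) s τ ξ / 2 * ∑ i, L i * ‖h i‖ ^ 2) := by
  have hsummand : ∀ J ∈ 𝒥, ∑ U ∈ distributedSampling p τ, (fJ J (x + U.piecewise h 0) - fJ J x) ≤
      ∑ U ∈ distributedSampling p τ with i₀ ∈ U, ∑ i, (#(K₀ ∩ U) : ℝ)⁻¹ *
        (fJ J (x + (#(K₀ ∩ U) : ℝ) • Pi.single i (h i)) - fJ J x) := fun J hJ => by
    obtain ⟨K, hJK, hK⟩ := exists_isBalanced_superset hp (h𝒥 J hJ) hξs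
    refine sum_distributedSampling_sub_le_of_dependsOn hp hK hK₀ hi₀ (hconv J hJ) ?_ x h
    exact fun y z hyz => hdep J hJ fun i hi => hyz i (hJK hi)
  calc ∑ U ∈ distributedSampling p τ, (f (x + U.piecewise h 0) - f x)
      = ∑ J ∈ 𝒥, ∑ U ∈ distributedSampling p τ, (fJ J (x + U.piecewise h 0) - fJ J x) := by
        simp only [hfJ, ← sum_sub_distrib]
        exact sum_comm
    _ ≤ ∑ J ∈ 𝒥, ∑ U ∈ distributedSampling p τ with i₀ ∈ U, ∑ i, (#(K₀ ∩ U) : ℝ)⁻¹ *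
          (fJ J (x + (#(K₀ ∩ U) : ℝ) • Pi.single i (h i)) - fJ J x) := sum_le_sum hsummand
    _ = ∑ U ∈ distributedSampling p τ with i₀ ∈ U, ∑ i, (#(K₀ ∩ U) : ℝ)⁻¹ *
          (f (x + (#(K₀ ∩ U) : ℝ) • Pi.single i (h i)) - f x) := by
        simp only [hfJ, ← sum_sub_distrib, mul_sum]
        rw [sum_comm]
        exact sum_congr rfl fun U _ => sum_comm
    _ ≤ ∑ U ∈ distributedSampling p τ with i₀ ∈ U,
          (fderiv ℝ f x h + (#(K₀ ∩ U) : ℝ) / 2 * ∑ i, L i * ‖h i‖ ^ 2) :=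
        sum_le_sum fun U hU => hL.sum_inv_mul_sub_le hf x h <| by
          rw [Nat.cast_pos, card_pos]
          exact ⟨i₀, mem_inter.2 ⟨hi₀, (mem_filter.1 hU).2⟩⟩
    _ = _ := by
        rw [sum_add_distrib, sum_const, nsmul_eq_mul, ← sum_mul, ← sum_div,
          sum_distributedSampling_mem_card_inter_eq_esoFactor_mul hp hK₀ hi₀]
        ring

theorem average_distributedSampling_le_esoFactor_zero_of_const (hp : IsBalanced p s univ)
    (hτs : τ ≤ s) (hconst : ∀ y z, f y = f z) (hL : BlockLipschitz f L) (x h : ∀ i, E i) :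
    (∑ U ∈ distributedSampling p τ, f (x + U.piecewise h 0)) / #(distributedSampling p τ) ≤
      f x + (Fintype.card κ : ℝ) * τ / Fintype.card ι *
        (fderiv ℝ f x h + esoFactor (Fintype.card κ) s τ 0 / 2 * ∑ i, L i * ‖h i‖ ^ 2) := by
  have hS : (#(distributedSampling p τ) : ℝ) ≠ 0 :=
    mod_cast (distributedSampling_nonempty hp hτs).card_ne_zero
  have hfderiv : fderiv ℝ f x h = 0 := by
    rw [funext fun y => hconst y x]
    simp
  have hβ := esoFactor_zero_nonneg (Fintype.card κ) hτs
  have hnorm : 0 ≤ ∑ i, L i * ‖h i‖ ^ 2 := sum_nonneg fun i _ => hL.mul_sq_nonneg i (h i)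
  rw [sum_congr rfl fun U _ => hconst _ x, sum_const, nsmul_eq_mul, mul_div_cancel_left₀ _ hS,
    hfderiv, zero_add, le_add_iff_nonneg_right]
  positivity

theorem average_distributedSampling_le_esoFactor [Nonempty κ] (hp : IsBalanced p s univ)
    (hτs : τ ≤ s) (hξ : 0 < ξ) (hξs : ξ ≤ s) (hfJ : ∀ x, f x = ∑ J ∈ 𝒥, fJ J x)
    (hconv : ∀ J ∈ 𝒥, ConvexOn ℝ Set.univ (fJ J)) (hdep : ∀ J ∈ 𝒥, DependsOn (fJ J) (J : Set ι))
    (h𝒥 : ∀ J ∈ 𝒥, ∀ c, #{i ∈ J | p i = c} ≤ ξ)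
    (hf : Differentiable ℝ f) (hL : BlockLipschitz f L) (x h : ∀ i, E i) :
    (∑ U ∈ distributedSampling p τ, f (x + U.piecewise h 0)) / #(distributedSampling p τ) ≤
      f x + (Fintype.card κ : ℝ) * τ / Fintype.card ι *
        (fderiv ℝ f x h + esoFactor (Fintype.card κ) s τ ξ / 2 * ∑ i, L i * ‖h i‖ ^ 2) := by
  obtain ⟨K₀, -, hK₀⟩ := exists_isBalanced_superset hp (J := ∅) (ξ := ξ) (by simp) hξs
  obtain ⟨i₀, hi₀⟩ : ∃ i₀, i₀ ∈ K₀ := by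
    obtain ⟨i, hi⟩ := card_pos.1 ((hK₀ (Classical.arbitrary κ)).symm ▸ hξ)
    exact ⟨i, mem_of_mem_filter i hi⟩
  have hS : (0 : ℝ) < #(distributedSampling p τ) :=
    mod_cast (distributedSampling_nonempty hp hτs).card_pos
  have hi₀S : (#{U ∈ distributedSampling p τ | i₀ ∈ U} : ℝ) =
      (Fintype.card κ : ℝ) * τ / Fintype.card ι * #(distributedSampling p τ) := by
    have h : (s : ℝ) * #{U ∈ distributedSampling p τ | i₀ ∈ U} = τ * #(distributedSampling p τ) :=
      mod_cast card_distributedSampling_mem hp i₀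
    rw [← card_univ (α := ι), hp.card_eq]
    have hs : 0 < s := hξ.trans_le hξs
    push_cast
    field_simp
    rwa [mul_comm]
  have hmain := sum_distributedSampling_sub_le_esoFactor (τ := τ) hp hK₀ hi₀ hξs hfJ hconv hdep h𝒥
    hf hL x h
  rw [sum_sub_distrib, sum_const, nsmul_eq_mul, hi₀S] at hmain
  rw [div_le_iff₀ hS]
  linarith

theorem average_distributedSampling_le_esoFactor_of_eq_sup (hp : IsBalanced p s univ) (hτs : τ ≤ s)
    (hfJ : ∀ x, f x = ∑ J ∈ 𝒥, fJ J x) (hconv : ∀ J ∈ 𝒥, ConvexOn ℝ Set.univ (fJ J))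
    (hdep : ∀ J ∈ 𝒥, DependsOn (fJ J) (J : Set ι))
    (hξ : ξ = 𝒥.sup fun J => univ.sup fun c => #{i ∈ J | p i = c})
    (hf : Differentiable ℝ f) (hL : BlockLipschitz f L) (x h : ∀ i, E i) :
    (∑ U ∈ distributedSampling p τ, f (x + U.piecewise h 0)) / #(distributedSampling p τ) ≤
      f x + (Fintype.card κ : ℝ) * τ / Fintype.card ι *
        (fderiv ℝ f x h + esoFactor (Fintype.card κ) s τ ξ / 2 * ∑ i, L i * ‖h i‖ ^ 2) := by
  have h𝒥 : ∀ J ∈ 𝒥, ∀ c, #{i ∈ J | p i = c} ≤ ξ := fun J hJ c =>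
    Finset.sup_le_iff.1 (Finset.sup_le_iff.1 hξ.ge J hJ) c (mem_univ c)
  rcases ξ.eq_zero_or_pos with rfl | hξpos
  · have hempty : ∀ J ∈ 𝒥, J = ∅ := fun J hJ => eq_empty_of_forall_notMem fun i hi =>
      (h𝒥 J hJ (p i)).not_gt (card_pos.2 ⟨i, by simp [hi]⟩)
    refine average_distributedSampling_le_esoFactor_zero_of_const hp hτs (fun y z => ?_) hL x h
    rw [hfJ, hfJ]
    exact sum_congr rfl fun J hJ => hdep J hJ fun i hi => by simp [hempty J hJ] at hi
  · obtain ⟨J, -, hJ⟩ := Finset.lt_sup_iff.1 (hξ ▸ hξpos)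
    obtain ⟨c, -, -⟩ := Finset.lt_sup_iff.1 hJ
    have : Nonempty κ := ⟨c⟩
    have hξs : ξ ≤ s := hξ ▸ Finset.sup_le fun J _ => Finset.sup_le fun c _ =>
      hp c ▸ card_le_card (filter_subset_filter _ (subset_univ J))
    exact average_distributedSampling_le_esoFactor hp hτs hξpos hξs hfJ hconv hdep h𝒥 hf hL x h

end Overapproximation

theorem distributed_ESO_general {ι κ : Type*} [Fintype ι] [DecidableEq ι] [Fintype κ]
    [DecidableEq κ] {E : ι → Type*} [∀ i, NormedAddCommGroup (E i)] [∀ i, NormedSpace ℝ (E i)]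
    {s τ ξ : ℕ} {L : ι → ℝ} {𝒥 : Finset (Finset ι)} {fJ : Finset ι → (∀ i, E i) → ℝ}
    {f : (∀ i, E i) → ℝ} (hf : ∀ x, f x = ∑ J ∈ 𝒥, fJ J x)
    (hconv : ∀ J ∈ 𝒥, ConvexOn ℝ Set.univ (fJ J)) (hdep : ∀ J ∈ 𝒥, DependsOn (fJ J) (J : Set ι))
    (hdiff : Differentiable ℝ f) (hLip : BlockLipschitz f L) {P : κ → Finset ι}
    (hpart : Finset.univ = Finset.univ.biUnion P)
    (hdisj : ∀ c c', c ≠ c' → Disjoint (P c) (P c')) (hsize : ∀ c, (P c).card = s)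
    (hτs : τ ≤ s)
    (hξ : ξ = 𝒥.sup fun J => Finset.univ.sup fun c => (P c ∩ J).card) (x h : ∀ i, E i) :
    (∑ Z ∈ Fintype.piFinset fun c => (P c).powersetCard τ,
        f (x + (Finset.univ.biUnion Z).piecewise h 0)) /
        (Fintype.piFinset fun c => (P c).powersetCard τ).card ≤
      f x + (Fintype.card κ : ℝ) * τ / Fintype.card ι *
        (fderiv ℝ f x h + esoFactor (Fintype.card κ) s τ ξ / 2 * ∑ i, L i * ‖h i‖ ^ 2) := by
  obtain ⟨p, rfl⟩ := exists_eq_filter_of_biUnion_eq_univ hpart hdisj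
  have hp : IsBalanced p s Finset.univ := hsize
  have hcard := sum_piFinset_powersetCard_biUnion (p := p) (τ := τ) fun _ => 1
  rw [← Finset.card_eq_sum_ones, ← Finset.card_eq_sum_ones] at hcard
  rw [sum_piFinset_powersetCard_biUnion fun U => f (x + U.piecewise h 0), hcard]
  simp only [Finset.filter_inter, Finset.univ_inter] at hξ
  exact average_distributedSampling_le_esoFactor_of_eq_sup hp hτs hf hconv hdep hξ hdiff hLip x h

/-- Expected separable overapproximation (ESO) for a partially separable smooth convex
function and a `(C,τ)`-distributed sampling.

`f = ∑_{J ∈ 𝒥} f_J` where each `f_J` is convex and depends only on the blocks in `J`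
(blocks live in `ℝ^(d i)`), `ω = max_{J ∈ 𝒥} |J|` is the degree of separability, the
block gradients of `f` are Lipschitz with constants `L i` (expressed via the dual
pairing), `P` is a balanced partition of the `n` blocks into `C` parts of size
`s = n / C`, the sampling picks a uniform `τ`-subset of each part independently, and
`ξ = max { |P c ∩ J| : c, J ∈ 𝒥 }`.  Then for all `x, h`:
`E[f(x + h_[Ẑ])] ≤ f(x) + (Cτ/n) (⟨∇f(x), h⟩ + (β/2) ‖h‖_w²)` with
`β = 1 + (ξ-1)(τ-1)/max{1, s-1} + (C-1) ξτ/s` and `w i = L i`. -/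
theorem distributed_ESO
    (n C s τ ξ ω : ℕ) (d : Fin n → ℕ) (L : Fin n → ℝ) (hL : ∀ i, 0 < L i)
    (𝒥 : Finset (Finset (Fin n)))
    (fJ : Finset (Fin n) → (∀ i : Fin n, EuclideanSpace ℝ (Fin (d i))) → ℝ)
    (f : (∀ i : Fin n, EuclideanSpace ℝ (Fin (d i))) → ℝ)
    (hf : ∀ x, f x = ∑ J ∈ 𝒥, fJ J x)
    (hconv : ∀ J ∈ 𝒥, ConvexOn ℝ Set.univ (fJ J))
    (hdep : ∀ J ∈ 𝒥, ∀ x y, (∀ i ∈ J, x i = y i) → fJ J x = fJ J y)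
    (hω : ω = 𝒥.sup Finset.card)
    (hdiff : Differentiable ℝ f)
    (hLip : ∀ (x : ∀ i : Fin n, EuclideanSpace ℝ (Fin (d i))) (i : Fin n)
        (t u : EuclideanSpace ℝ (Fin (d i))),
      |fderiv ℝ f (x + Function.update (fun _ => 0) i t) (Function.update (fun _ => 0) i u)
          - fderiv ℝ f x (Function.update (fun _ => 0) i u)| ≤ L i * ‖t‖ * ‖u‖)
    (P : Fin C → Finset (Fin n))
    (hpart : Finset.univ = Finset.univ.biUnion P)
    (hdisj : ∀ c c' : Fin C, c ≠ c' → Disjoint (P c) (P c'))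
    (hsize : ∀ c, (P c).card = s) (hn : n = C * s)
    (hτ1 : 1 ≤ τ) (hτs : τ ≤ s)
    (hξ : ξ = 𝒥.sup (fun J => Finset.univ.sup (fun c => (P c ∩ J).card))) :
    ∀ x h : ∀ i : Fin n, EuclideanSpace ℝ (Fin (d i)),
      (∑ Z ∈ Fintype.piFinset (fun c : Fin C => (P c).powersetCard τ),
          f (x + fun i => if i ∈ Finset.univ.biUnion Z then h i else 0))
        / ((Fintype.piFinset (fun c : Fin C => (P c).powersetCard τ)).card : ℝ)
      ≤ f x + (C : ℝ) * τ / n *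
          (fderiv ℝ f x h
            + (1 + ((ξ : ℝ) - 1) * ((τ : ℝ) - 1) / max 1 ((s : ℝ) - 1)
                + ((C : ℝ) - 1) * ((ξ : ℝ) * τ / s)) / 2
              * ∑ i : Fin n, L i * ‖h i‖ ^ 2) := by
  intro x h
  simpa only [Fintype.card_fin] using!
    distributed_ESO_general hf hconv hdep hdiff hLip hpart hdisj hsize hτs hξ x h
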